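/- Let f : S → ℂ be a solution of the integral Kannappan equation. Then f(τ(x)) = f(x) for all x ∈ S. -/

import Mathlib

open Function

theorem apply_involutive_eq_of_add_eq_mul {X R : Type*} [AddCommMagma R] [Mul R] {τ : X → X}
    (hτ : Involutive τ) {φ f : X → R} {a : R} (ha : IsLeftRegular a)
    (h : ∀ y, φ y + φ (τ y) = a * f y) (y : X) : f (τ y) = f y := by
  refine ha ?_
  calc
    a * f (τ y) = φ (τ y) + φ (τ (τ y)) := (h (τ y)).symm
    _ = φ y + φ (τ y) := by rw [hτ y, add_comm]
    _ = a * f y := h y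

/-- The integral Kannappan equation is the case `φ x y = ∫ f (x * y * t) dμ(t)`. -/
theorem stmt_12_general {S R : Type*} [NonAssocSemiring R] [IsLeftCancelMulZero R] [NeZero (2 : R)]
    {τ : S → S} (hτ : Involutive τ) (φ : S → S → R) {f : S → R}
    (hφ : ∀ x y, φ x y + φ x (τ y) = 2 * f x * f y) (x : S) : f (τ x) = f x := by
  by_cases hf : ∃ a, f a ≠ 0
  · obtain ⟨a, ha⟩ := hf
    have h_regular : IsLeftRegular (2 * f a) :=
      mul_right_injective₀ (mul_ne_zero two_ne_zero ha)
    exact apply_involutive_eq_of_add_eq_mul hτ h_regular (hφ a) x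
  · push Not at hf
    rw [hf, hf]

theorem stmt_12 {S ι : Type*} [Semigroup S] (τ : S → S)
    (hτmul : ∀ x y : S, τ (x * y) = τ y * τ x)
    (hτinv : ∀ x : S, τ (τ x) = x)
    (I : Finset ι) (c : ι → ℂ) (z : ι → S)
    (hz : ∀ i ∈ I, ∀ s : S, z i * s = s * z i)
    (f : S → ℂ)
(hK : ∀ x y : S,
      (∑ i ∈ I, c i * f (x * y * z i)) + (∑ i ∈ I, c i * f (x * τ y * z i))
        = 2 * f x * f y) :
    ∀ x : S, f (τ x) = f x :=
  stmt_12_general hτinv (fun x y ↦ ∑ i ∈ I, c i * f (x * y * z i)) hK
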